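/- Every plain function-passing (PFP) well-structured rewriting system is accessible: for every PFP rule f l⃗ → r with Θ_f = Πx⃗:T⃗.U and |x⃗| = |l⃗|, and every substitution σ, if ⊢ Θ_f : s_f, Θ_f ∈ 𝒟 and [x⃗↦l⃗]σ ⊨ x⃗:T⃗, then σ ⊨ Δ_{f l⃗→r}. -/

import Mathlib

set_option maxHeartbeats 1000000

/-! # Terms of λΠ/R (de Bruijn representation) -/

inductive Trm (F : Type) : Type
  | type : Trm F
  | kind : Trm F
  | var : ℕ → Trm F
  | sym : F → Trm F
  | pi : Trm F → Trm F → Trm F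
  | app : Trm F → Trm F → Trm F
  | lam : Trm F → Trm F → Trm F

namespace Trm

variable {F : Type}

/-- Lifting of a renaming under a binder. -/
def upRen (ρ : ℕ → ℕ) : ℕ → ℕ
  | 0 => 0
  | n + 1 => ρ n + 1

/-- Renaming of (de Bruijn) variables. -/
def rename (ρ : ℕ → ℕ) : Trm F → Trm F
  | .type => .type
  | .kind => .kind
  | .var n => .var (ρ n)
  | .sym f => .sym f
  | .pi A B => .pi (rename ρ A) (rename (upRen ρ) B)
  | .app t u => .app (rename ρ t) (rename ρ u)
  | .lam A b => .lam (rename ρ A) (rename (upRen ρ) b)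

/-- Lifting of a substitution under a binder. -/
def up (σ : ℕ → Trm F) : ℕ → Trm F
  | 0 => .var 0
  | n + 1 => rename Nat.succ (σ n)

/-- Capture-avoiding (parallel) substitution. -/
def subst (σ : ℕ → Trm F) : Trm F → Trm F
  | .type => .type
  | .kind => .kind
  | .var n => σ n
  | .sym f => .sym f
  | .pi A B => .pi (subst σ A) (subst (up σ) B)
  | .app t u => .app (subst σ t) (subst σ u)
  | .lam A b => .lam (subst σ A) (subst (up σ) b)

/-- Cons of a term on a substitution: `scons a σ` maps `0` to `a` and `n+1` to `σ n`. -/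
def scons (a : Trm F) (σ : ℕ → Trm F) : ℕ → Trm F
  | 0 => a
  | n + 1 => σ n

/-- Substitution of the first free variable: `t[x ↦ a]`. -/
def subst1 (a t : Trm F) : Trm F := subst (scons a .var) t

/-- Shifting of all free variables. -/
def shift : Trm F → Trm F := rename Nat.succ

/-- Application of a head term to a list of arguments: `appList h [t1,…,tn] = h t1 … tn`. -/
def appList (h : Trm F) : List (Trm F) → Trm F
  | [] => h
  | a :: as => appList (.app h a) as

/-- Free (de Bruijn) variables of a term. -/
def FV : Trm F → Set ℕ
  | .type => ∅
  | .kind => ∅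
  | .var n => {n}
  | .sym _ => ∅
  | .pi A B => FV A ∪ {n | n + 1 ∈ FV B}
  | .app t u => FV t ∪ FV u
  | .lam A b => FV A ∪ {n | n + 1 ∈ FV b}

/-- The class 𝕂 of kinds: `K = TYPE | Πx:t.K`. -/
def IsKind : Trm F → Prop
  | .type => True
  | .pi _ B => IsKind B
  | _ => False

/-- Sorts: `TYPE` and `KIND`. -/
def IsSort (s : Trm F) : Prop := s = .type ∨ s = .kind

/-- The product arity of a term: the number of leading products. -/
def piArity : Trm F → ℕ
  | .pi _ B => piArity B + 1
  | _ => 0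

/-- Strip `n` leading products. -/
def piCodN : ℕ → Trm F → Trm F
  | 0, T => T
  | n + 1, .pi _ B => piCodN n B
  | _ + 1, T => T

/-- The first `n` domains of the leading products, as a de Bruijn context
(type of variable `0` first, i.e. innermost first). -/
def teleN : ℕ → Trm F → List (Trm F)
  | 0, _ => []
  | n + 1, .pi A B => teleN n B ++ [A]
  | _ + 1, _ => []

/-- The full telescope of leading products, as a de Bruijn context. -/
def telescope (T : Trm F) : List (Trm F) := teleN (piArity T) T

/-- The domains of the leading products, outermost first. -/
def piDoms : Trm F → List (Trm F)
  | .pi A B => A :: piDoms B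
  | _ => []

end Trm

/-- The subterm relation (reflexive and transitive). -/
inductive Subterm {F : Type} : Trm F → Trm F → Prop
  | refl (t : Trm F) : Subterm t t
  | piL {t A B} : Subterm t A → Subterm t (.pi A B)
  | piR {t A B} : Subterm t B → Subterm t (.pi A B)
  | appL {t u v} : Subterm t u → Subterm t (.app u v)
  | appR {t u v} : Subterm t v → Subterm t (.app u v)
  | lamL {t A b} : Subterm t A → Subterm t (.lam A b)
  | lamR {t A b} : Subterm t b → Subterm t (.lam A b)

/-! # Rewriting -/

/-- A set of rewriting rules `l → r`. -/
abbrev Rules (F : Type) := Set (Trm F × Trm F)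

/-- `R` is a rewriting system: for every rule `l → r`, `FV(r) ⊆ FV(l)` and
`l` is of the form `f l⃗`. -/
def IsRewriteSystem {F : Type} (R : Rules F) : Prop :=
  ∀ p ∈ R, Trm.FV p.2 ⊆ Trm.FV p.1 ∧ ∃ (f : F) (ls : List (Trm F)), p.1 = Trm.appList (.sym f) ls

/-- A symbol is defined if it heads the left-hand side of some rule. -/
def Defined {F : Type} (R : Rules F) (f : F) : Prop :=
  ∃ (ls : List (Trm F)) (r : Trm F), (Trm.appList (.sym f) ls, r) ∈ R

/-- One-step reduction `→ = →β ∪ →R`: β-reduction together with the closure of the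
rules of `R` by substitution and context. -/
inductive Red {F : Type} (R : Rules F) : Trm F → Trm F → Prop
  | beta (A b a : Trm F) : Red R (.app (.lam A b) a) (Trm.subst1 a b)
  | rule {l r : Trm F} (σ : ℕ → Trm F) : (l, r) ∈ R → Red R (Trm.subst σ l) (Trm.subst σ r)
  | appL {t t' u} : Red R t t' → Red R (.app t u) (.app t' u)
  | appR {t u u'} : Red R u u' → Red R (.app t u) (.app t u')
  | piL {A A' B} : Red R A A' → Red R (.pi A B) (.pi A' B)
  | piR {A B B'} : Red R B B' → Red R (.pi A B) (.pi A B')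
  | lamL {A A' b} : Red R A A' → Red R (.lam A b) (.lam A' b)
  | lamR {A b b'} : Red R b b' → Red R (.lam A b) (.lam A b')

/-- Multi-step reduction `→*`. -/
def RedStar {F : Type} (R : Rules F) : Trm F → Trm F → Prop := Relation.ReflTransGen (Red R)

/-- Joinability `↓`. -/
def Joinable {F : Type} (R : Rules F) (t u : Trm F) : Prop :=
  ∃ v, RedStar R t v ∧ RedStar R u v

/-- Local confluence: `← · → ⊆ →* · *←`. -/
def LocallyConfluent {F : Type} (R : Rules F) : Prop :=
  ∀ t u v, Red R t u → Red R t v → Joinable R u v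

/-- `t` is strongly normalizing (terminating): no infinite reduction sequence from `t`. -/
def SN {F : Type} (R : Rules F) (t : Trm F) : Prop := Acc (fun a b => Red R b a) t

/-- The set of strongly normalizing terms. -/
def SNset {F : Type} (R : Rules F) : Set (Trm F) := {t | SN R t}

/-- `t` is in normal form. -/
def NormalForm {F : Type} (R : Rules F) (t : Trm F) : Prop := ∀ u, ¬ Red R t u

/-- Neutral terms: `(λx:A.t)u v⃗`, `x v⃗`, or `f v⃗` where every rule `f l⃗ → r ∈ R`
satisfies `|l⃗| ≤ |v⃗|`. -/
def Neutral {F : Type} (R : Rules F) (t : Trm F) : Prop :=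
  (∃ (A b a : Trm F) (vs : List (Trm F)), t = Trm.appList (.app (.lam A b) a) vs) ∨
  (∃ (x : ℕ) (vs : List (Trm F)), t = Trm.appList (.var x) vs) ∨
  (∃ (f : F) (vs : List (Trm F)), t = Trm.appList (.sym f) vs ∧
    ∀ (ls : List (Trm F)) (r : Trm F), (Trm.appList (.sym f) ls, r) ∈ R → ls.length ≤ vs.length)

/-- Computability predicates: `S ⊆ SN`, `S` is closed under reduction, and `S` contains
every neutral term all of whose one-step reducts are in `S`. -/
def IsCompPred {F : Type} (R : Rules F) (S : Set (Trm F)) : Prop :=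
  S ⊆ SNset R ∧ (∀ t ∈ S, ∀ u, Red R t u → u ∈ S) ∧
  (∀ t, Neutral R t → (∀ u, Red R t u → u ∈ S) → t ∈ S)

/-! # Typing: λP extended with function symbols and conversion modulo `→` -/

/-- The typing rules of λΠ/R: the rules of λP (in de Bruijn presentation) with the extra
rule (fun) `⊢ f : Θ_f` and conversion up to joinability for `→`. -/
inductive Typing {F : Type} (R : Rules F) (Θ sΘ : F → Trm F) :
    List (Trm F) → Trm F → Trm F → Prop
  | ax : Typing R Θ sΘ [] .type .kind
  | var {Γ A s} : Trm.IsSort s → Typing R Θ sΘ Γ A s →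
      Typing R Θ sΘ (A :: Γ) (.var 0) (Trm.shift A)
  | weak {Γ A s b B} : Trm.IsSort s → Typing R Θ sΘ Γ A s → Typing R Θ sΘ Γ b B →
      Typing R Θ sΘ (A :: Γ) (Trm.shift b) (Trm.shift B)
  | prod {Γ A B s} : Trm.IsSort s → Typing R Θ sΘ Γ A .type → Typing R Θ sΘ (A :: Γ) B s →
      Typing R Θ sΘ Γ (.pi A B) s
  | abs {Γ A b B s} : Trm.IsSort s → Typing R Θ sΘ (A :: Γ) b B →
      Typing R Θ sΘ Γ (.pi A B) s → Typing R Θ sΘ Γ (.lam A b) (.pi A B)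
  | app {Γ t a A B} : Typing R Θ sΘ Γ t (.pi A B) → Typing R Θ sΘ Γ a A →
      Typing R Θ sΘ Γ (.app t a) (Trm.subst1 a B)
  | conv {Γ a A B s} : Typing R Θ sΘ Γ a A → Joinable R A B → Typing R Θ sΘ Γ B s →
      Trm.IsSort s → Typing R Θ sΘ Γ a B
  | symb (f : F) : Trm.IsSort (sΘ f) → Typing R Θ sΘ [] (Θ f) (sΘ f) →
      Typing R Θ sΘ [] (.sym f) (Θ f)

/-- `→` preserves typing (subject reduction). -/
def PresTyping {F : Type} (R : Rules F) (Θ sΘ : F → Trm F) : Prop :=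
  ∀ Γ t u T, Typing R Θ sΘ Γ t T → Red R t u → Typing R Θ sΘ Γ u T

/-- A substitution `γ` is well-typed from `Δ` to `Γ` (for a generic typing judgment `Ty`):
for all `(x : T) ∈ Δ`, `Ty Γ (xγ) (Tγ)`. -/
def SubstTyped {F : Type} (Ty : List (Trm F) → Trm F → Trm F → Prop)
    (Γ : List (Trm F)) (γ : ℕ → Trm F) (Δ : List (Trm F)) : Prop :=
  ∀ i A, Δ[i]? = some A → Ty Γ (γ i) (Trm.subst (fun j => γ (j + i + 1)) A)

/-! # Interpretation of types as computability predicates -/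

/-- `𝕀`: partial functions from terms to sets of terms. -/
abbrev Interp (F : Type) := Trm F → Part (Set (Trm F))

/-- Graph inclusion of partial functions. -/
def InterpLE {F : Type} (I J : Interp F) : Prop := ∀ T S, S ∈ I T → S ∈ J T

/-- `I` is the least fixpoint of `φ` on `𝕀` (ordered by graph inclusion). -/
def IsLfpInterp {F : Type} (φ : Interp F → Interp F) (I : Interp F) : Prop :=
  φ I = I ∧ ∀ J, φ J = J → InterpLE I J

/-- The domain `D(I)`: terminating terms `T` such that whenever `T →* Πx:A.B`,
`A ∈ dom(I)` and `B[x↦a] ∈ dom(I)` for all `a ∈ I(A)`. -/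
def domD {F : Type} (R : Rules F) (I : Interp F) : Set (Trm F) :=
  {T | SN R T ∧ ∀ A B, RedStar R T (.pi A B) →
    (I A).Dom ∧ ∀ S ∈ I A, ∀ a ∈ S, (I (Trm.subst1 a B)).Dom}

/-- `{t | ∀ a ∈ I(A), t a ∈ I(B[x↦a])}` (relational reading of the partial function `I`). -/
def piPart {F : Type} (I : Interp F) (A B : Trm F) : Set (Trm F) :=
  {t | ∀ S ∈ I A, ∀ a ∈ S, ∀ S' ∈ I (Trm.subst1 a B), Trm.app t a ∈ S'}

open Classical in
/-- The monotone function `F : 𝕀 → 𝕀`: `dom(F(I)) = D(I)`; `F(I)(T) = SN` if the normal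
form of `T` is not a product; `F(I)(T) = {t | ∀ a ∈ I(A), t a ∈ I(B[x↦a])}` if the normal
form of `T` is `Πx:A.B`. -/
noncomputable def interpF {F : Type} (R : Rules F) (I : Interp F) : Interp F := fun T =>
  ⟨T ∈ domD R I, fun _ =>
    if h : ∃ A B, RedStar R T (.pi A B) ∧ NormalForm R (.pi A B) then
      piPart I h.choose h.choose_spec.choose
    else SNset R⟩

/-- The value of a partial interpretation at `T` (as a set). -/
def partMem {F : Type} (I : Interp F) (T : Trm F) : Set (Trm F) := {t | ∀ S ∈ I T, t ∈ S}

open Classical in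
/-- The interpretation `⟦T⟧σ` of a term `T` wrt a substitution `σ`, relative to the least
fixpoint `I = ℐ` of `interpF`: `⟦s⟧σ = 𝒟` for `s` a sort;
`⟦Πx:A.K⟧σ = {t | ∀ a ∈ ⟦A⟧σ, t a ∈ ⟦K⟧[x↦a,σ]}` for `K` a kind;
`⟦T⟧σ = ℐ(Tσ)` if `T` is neither a kind nor `KIND` and `Tσ ∈ 𝒟`; `⟦T⟧σ = SN` otherwise. -/
noncomputable def interp {F : Type} (R : Rules F) (I : Interp F) :
    Trm F → (ℕ → Trm F) → Set (Trm F)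
  | .type, _ => domD R I
  | .kind, _ => domD R I
  | .pi A B, σ =>
      if Trm.IsKind B then
        {t | ∀ a ∈ interp R I A σ, Trm.app t a ∈ interp R I B (Trm.scons a σ)}
      else if Trm.subst σ (.pi A B) ∈ domD R I then partMem I (Trm.subst σ (.pi A B))
      else SNset R
  | .var n, σ =>
      if Trm.subst σ (.var n) ∈ domD R I then partMem I (Trm.subst σ (.var n)) else SNset R
  | .sym g, σ =>
      if Trm.subst σ (.sym g) ∈ domD R I then partMem I (Trm.subst σ (.sym g)) else SNset R
  | .app t u, σ =>
      if Trm.subst σ (.app t u) ∈ domD R I then partMem I (Trm.subst σ (.app t u)) else SNset R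
  | .lam A b, σ =>
      if Trm.subst σ (.lam A b) ∈ domD R I then partMem I (Trm.subst σ (.lam A b)) else SNset R

/-- `σ ⊨ Γ`: a substitution is adequate wrt an environment. -/
def Models {F : Type} (R : Rules F) (I : Interp F) (σ : ℕ → Trm F) (Γ : List (Trm F)) : Prop :=
  ∀ i A, Γ[i]? = some A → σ i ∈ interp R I A (fun j => σ (j + i + 1))

/-- The typing map `Θ` is adequate: `f ∈ ⟦Θ_f⟧` whenever `⊢ Θ_f : s_f` and `Θ_f ∈ ⟦s_f⟧`. -/
def Adequate {F : Type} (R : Rules F) (Θ sΘ : F → Trm F) (I : Interp F) : Prop :=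
  ∀ f : F, Typing R Θ sΘ [] (Θ f) (sΘ f) → Θ f ∈ interp R I (sΘ f) Trm.var →
    Trm.sym f ∈ interp R I (Θ f) Trm.var

/-- The substitution `[x⃗ ↦ l⃗]` (where `ls` lists the images of variables `0, 1, …`). -/
def mkSubst {F : Type} (ls : List (Trm F)) : ℕ → Trm F := fun i =>
  (ls[i]?).getD (.var (i - ls.length))

/-- Composition of substitutions: `x ↦ (xγ)σ`. -/
def compSubst {F : Type} (γ σ : ℕ → Trm F) : ℕ → Trm F := fun i => Trm.subst σ (γ i)

/-- The set `ℂ` of terms `f t⃗` with `|t⃗| = arit(Θ_f)`, `⊢ Θ_f : s_f`, `Θ_f ∈ ⟦s_f⟧` and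
`[x⃗↦t⃗] ⊨ Γ_f`. -/
def CC {F : Type} (R : Rules F) (Θ sΘ : F → Trm F) (I : Interp F) : Set (Trm F) :=
  {t | ∃ (f : F) (ts : List (Trm F)), t = Trm.appList (.sym f) ts ∧
    ts.length = Trm.piArity (Θ f) ∧
    Typing R Θ sΘ [] (Θ f) (sΘ f) ∧ Θ f ∈ interp R I (sΘ f) Trm.var ∧
    Models R I (mkSubst ts.reverse) (Trm.telescope (Θ f))}

/-! # Dependency pairs -/

/-- Occurrences of `p` in a term, not at the root, such that `p` is not further applied
(i.e. `p` collects all the arguments of its head at this occurrence). -/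
inductive MaxOccNR {F : Type} (p : Trm F) : Trm F → Prop
  | appL {u v} : MaxOccNR p u → MaxOccNR p (.app u v)
  | appR {u v} : MaxOccNR p v → MaxOccNR p (.app u v)
  | appRroot {u} : MaxOccNR p (.app u p)
  | piL {A B} : MaxOccNR p A → MaxOccNR p (.pi A B)
  | piLroot {B} : MaxOccNR p (.pi p B)
  | piR {A B} : MaxOccNR p B → MaxOccNR p (.pi A B)
  | piRroot {A} : MaxOccNR p (.pi A p)
  | lamL {A b} : MaxOccNR p A → MaxOccNR p (.lam A b)
  | lamLroot {b} : MaxOccNR p (.lam p b)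
  | lamR {A b} : MaxOccNR p b → MaxOccNR p (.lam A b)
  | lamRroot {A} : MaxOccNR p (.lam A p)

/-- `p` occurs in `t` as a maximal application. -/
def MaxOcc {F : Type} (p t : Trm F) : Prop := t = p ∨ MaxOccNR p t

/-- Dependency pairs: `f l⃗ > g m⃗` iff there is a rule `f l⃗ → r ∈ R`, `g` is defined and
`g m⃗` is a subterm of `r` such that `m⃗` are all the arguments to which `g` is applied. -/
def DepPair {F : Type} (R : Rules F) (f : F) (ls : List (Trm F)) (g : F)
    (ms : List (Trm F)) : Prop :=
  Defined R g ∧ ∃ r, (Trm.appList (.sym f) ls, r) ∈ R ∧ MaxOcc (Trm.appList (.sym g) ms) r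

/-- `f t⃗ →arg f u⃗`: reduction of exactly one argument. -/
def ArgRed {F : Type} (R : Rules F) (t u : Trm F) : Prop :=
  ∃ (f : F) (pre post : List (Trm F)) (a b : Trm F), Red R a b ∧
    t = Trm.appList (.sym f) (pre ++ a :: post) ∧ u = Trm.appList (.sym f) (pre ++ b :: post)

/-- `>ₛ`: the closure of the dependency pair relation by substitution and left-application:
`f t₁…t_p >ₛ g u₁…u_q` iff there are a dependency pair `f l₁…l_i > g m₁…m_j` with `i ≤ p`
and `j ≤ q` and a substitution `σ` such that `t_k →* l_kσ` for `k ≤ i` and `m_kσ = u_k`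
for `k ≤ j`. -/
def GTsub {F : Type} (R : Rules F) (t u : Trm F) : Prop :=
  ∃ (f g : F) (ts us ls ms : List (Trm F)) (σ : ℕ → Trm F),
    t = Trm.appList (.sym f) ts ∧ u = Trm.appList (.sym g) us ∧
    DepPair R f ls g ms ∧ ls.length ≤ ts.length ∧ ms.length ≤ us.length ∧
    (∀ (k : ℕ) (tk lk : Trm F), ts[k]? = some tk → ls[k]? = some lk → RedStar R tk (Trm.subst σ lk)) ∧
    (∀ (k : ℕ) (mk : Trm F), ms[k]? = some mk → us[k]? = some (Trm.subst σ mk))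

/-- The call relation `≻̃ = →arg* · >ₛ` on `ℂ`. -/
def CallRel {F : Type} (R : Rules F) (Θ sΘ : F → Trm F) (I : Interp F) (t u : Trm F) : Prop :=
  t ∈ CC R Θ sΘ I ∧ u ∈ CC R Θ sΘ I ∧
    ∃ v, Relation.ReflTransGen (ArgRed R) t v ∧ GTsub R v u

/-! # Precedence and well-structured systems -/

/-- `f ⪰ g` (one step): `g` occurs in `Θ_f` or in the right-hand side of a rule of `f`. -/
def PrecBase {F : Type} (R : Rules F) (Θ : F → Trm F) (f g : F) : Prop :=
  Subterm (.sym g) (Θ f) ∨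
  ∃ (ls : List (Trm F)) (r : Trm F), (Trm.appList (.sym f) ls, r) ∈ R ∧ Subterm (.sym g) r

/-- `⪰`: the smallest quasi-order containing `PrecBase`. -/
def Preceq {F : Type} (R : Rules F) (Θ : F → Trm F) : F → F → Prop :=
  Relation.ReflTransGen (PrecBase R Θ)

/-- `≻`: the strict part of `⪰`. -/
def Prec {F : Type} (R : Rules F) (Θ : F → Trm F) (f g : F) : Prop :=
  Preceq R Θ f g ∧ ¬ Preceq R Θ g f

/-- The restricted type system `⊢_{≺ f}`: as `Typing`, but function symbols may only be
introduced when strictly smaller than `f` in the precedence. -/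
inductive LTyp {F : Type} (R : Rules F) (Θ sΘ : F → Trm F) (f : F) :
    List (Trm F) → Trm F → Trm F → Prop
  | ax : LTyp R Θ sΘ f [] .type .kind
  | var {Γ A s} : Trm.IsSort s → LTyp R Θ sΘ f Γ A s →
      LTyp R Θ sΘ f (A :: Γ) (.var 0) (Trm.shift A)
  | weak {Γ A s b B} : Trm.IsSort s → LTyp R Θ sΘ f Γ A s → LTyp R Θ sΘ f Γ b B →
      LTyp R Θ sΘ f (A :: Γ) (Trm.shift b) (Trm.shift B)
  | prod {Γ A B s} : Trm.IsSort s → LTyp R Θ sΘ f Γ A .type → LTyp R Θ sΘ f (A :: Γ) B s →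
      LTyp R Θ sΘ f Γ (.pi A B) s
  | abs {Γ A b B s} : Trm.IsSort s → LTyp R Θ sΘ f (A :: Γ) b B →
      LTyp R Θ sΘ f Γ (.pi A B) s → LTyp R Θ sΘ f Γ (.lam A b) (.pi A B)
  | app {Γ t a A B} : LTyp R Θ sΘ f Γ t (.pi A B) → LTyp R Θ sΘ f Γ a A →
      LTyp R Θ sΘ f Γ (.app t a) (Trm.subst1 a B)
  | conv {Γ a A B s} : LTyp R Θ sΘ f Γ a A → Joinable R A B → LTyp R Θ sΘ f Γ B s →
      Trm.IsSort s → LTyp R Θ sΘ f Γ a B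
  | symb (g : F) : Prec R Θ f g → Trm.IsSort (sΘ g) → LTyp R Θ sΘ f [] (Θ g) (sΘ g) →
      LTyp R Θ sΘ f [] (.sym g) (Θ g)

/-- The arguments `y⃗γ = [y₁γ, …, y_jγ]` of an instantiated dependency pair right-hand
side, where `y_j` is de Bruijn variable `0`. -/
def dpArgs {F : Type} (γ : ℕ → Trm F) (j : ℕ) : List (Trm F) :=
  (List.range j).reverse.map γ

/-- The restricted type system `⊢_{f l⃗}` (computability closure): as `Typing`, except that
types are required to be typable using symbols smaller than `f` only, and function symbols
are introduced either as undefined constants or through instances of dependency pairs of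
`f l⃗`. -/
inductive RTyp {F : Type} (R : Rules F) (Θ sΘ : F → Trm F) (f : F) (ls : List (Trm F)) :
    List (Trm F) → Trm F → Trm F → Prop
  | ax : RTyp R Θ sΘ f ls [] .type .kind
  | var {Γ A s} : Trm.IsSort s → LTyp R Θ sΘ f Γ A s →
      RTyp R Θ sΘ f ls (A :: Γ) (.var 0) (Trm.shift A)
  | weak {Γ A s b B} : Trm.IsSort s → LTyp R Θ sΘ f Γ A s → RTyp R Θ sΘ f ls Γ b B →
      RTyp R Θ sΘ f ls (A :: Γ) (Trm.shift b) (Trm.shift B)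
  | prod {Γ A B s} : Trm.IsSort s → RTyp R Θ sΘ f ls Γ A .type →
      RTyp R Θ sΘ f ls (A :: Γ) B s → RTyp R Θ sΘ f ls Γ (.pi A B) s
  | abs {Γ A b B s} : Trm.IsSort s → RTyp R Θ sΘ f ls (A :: Γ) b B →
      LTyp R Θ sΘ f Γ (.pi A B) s → RTyp R Θ sΘ f ls Γ (.lam A b) (.pi A B)
  | app {Γ t a A B s} : Trm.IsSort s → RTyp R Θ sΘ f ls Γ t (.pi A B) →
      RTyp R Θ sΘ f ls Γ a A → LTyp R Θ sΘ f Γ (.pi A B) s →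
      RTyp R Θ sΘ f ls Γ (.app t a) (Trm.subst1 a B)
  | conv {Γ a A B s s'} : Trm.IsSort s → Trm.IsSort s' → RTyp R Θ sΘ f ls Γ a A →
      Joinable R A B → LTyp R Θ sΘ f Γ B s → LTyp R Θ sΘ f Γ A s' →
      RTyp R Θ sΘ f ls Γ a B
  | dp {Γ : List (Trm F)} (g : F) (γ : ℕ → Trm F) (j : ℕ) :
      j ≤ Trm.piArity (Θ g) → Trm.IsSort (sΘ g) → LTyp R Θ sΘ f [] (Θ g) (sΘ g) →
      (∀ i A, (Trm.teleN j (Θ g))[i]? = some A →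
        RTyp R Θ sΘ f ls Γ (γ i) (Trm.subst (fun k => γ (k + i + 1)) A)) →
      DepPair R f ls g (dpArgs γ j) →
      RTyp R Θ sΘ f ls Γ (Trm.appList (.sym g) (dpArgs γ j)) (Trm.subst γ (Trm.piCodN j (Θ g)))
  | const (g : F) : ¬ Defined R g → Trm.IsSort (sΘ g) → LTyp R Θ sΘ f [] (Θ g) (sΘ g) →
      RTyp R Θ sΘ f ls [] (.sym g) (Θ g)

/-- `R` is well-structured (wrt the assignment `Δ` of an environment to every rule):
(a) `≻` is well-founded; (b) `|l⃗| ≤ arit(Θ_f)` for every rule `f l⃗ → r`;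
(c) `|m⃗| ≤ arit(Θ_g)` for every dependency pair `f l⃗ > g m⃗`;
(d) `Δ_{f l⃗→r} ⊢_{f l⃗} r : U[x⃗↦l⃗]` for every rule `f l⃗ → r`, where `Θ_f = Πx⃗:T⃗.U`. -/
def WellStructured {F : Type} (R : Rules F) (Θ sΘ : F → Trm F)
    (Δ : Trm F → Trm F → List (Trm F)) : Prop :=
  WellFounded (fun g f => Prec R Θ f g) ∧
  (∀ l r, (l, r) ∈ R → ∀ (f : F) ls, l = Trm.appList (.sym f) ls →
    ls.length ≤ Trm.piArity (Θ f)) ∧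
  (∀ (f : F) ls (g : F) ms, DepPair R f ls g ms → ms.length ≤ Trm.piArity (Θ g)) ∧
  (∀ l r, (l, r) ∈ R → ∀ (f : F) ls, l = Trm.appList (.sym f) ls →
    RTyp R Θ sΘ f ls (Δ l r) r (Trm.subst (mkSubst ls.reverse) (Trm.piCodN ls.length (Θ f))))

/-- `R` is accessible: for every rule `f l⃗ → r` with `Θ_f = Πx⃗:T⃗.U`, `|x⃗| = |l⃗|`, and
every substitution `σ`, `σ ⊨ Δ_{f l⃗→r}` whenever `⊢ Θ_f : s_f`, `Θ_f ∈ ⟦s_f⟧` and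
`[x⃗↦l⃗]σ ⊨ x⃗:T⃗`. -/
def Accessible {F : Type} (R : Rules F) (Θ sΘ : F → Trm F) (I : Interp F)
    (Δ : Trm F → Trm F → List (Trm F)) : Prop :=
  ∀ l r, (l, r) ∈ R → ∀ (f : F) ls, l = Trm.appList (.sym f) ls → ∀ σ : ℕ → Trm F,
    Typing R Θ sΘ [] (Θ f) (sΘ f) → Θ f ∈ interp R I (sΘ f) Trm.var →
    Models R I (compSubst (mkSubst ls.reverse) σ) (Trm.teleN ls.length (Θ f)) →
    Models R I σ (Δ l r)

/-- A term in `𝕂 ∪ {KIND}`. -/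
def IsKindLike {F : Type} (t : Trm F) : Prop := Trm.IsKind t ∨ t = .kind

/-- `R` is plain function-passing (PFP): for every rule `f l⃗ → r` with `Θ_f = Πx⃗:T⃗.U` and
`|x⃗| = |l⃗|`, no `l_i` is a kind or `KIND`, and every `(y : T) ∈ Δ_{f l⃗→r}` satisfies:
either there is `i` with `y = l_i` and `T = T_i[x⃗↦l⃗]`, or `y ∈ FV(l_i)` and `T = D t⃗`
with `D` undefined and `|t⃗| = arit(Θ_D)`. -/
def PFP {F : Type} (R : Rules F) (Θ : F → Trm F) (Δ : Trm F → Trm F → List (Trm F)) : Prop :=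
  ∀ l r, (l, r) ∈ R → ∀ (f : F) ls, l = Trm.appList (.sym f) ls →
    (∀ li ∈ ls, ¬ IsKindLike li) ∧
    (∀ i A, (Δ l r)[i]? = some A →
      (∃ (k : ℕ) (Tk : Trm F), ls[k]? = some (Trm.var i) ∧ (Trm.piDoms (Θ f))[k]? = some Tk ∧
        Trm.rename (fun j => j + i + 1) A = Trm.subst (mkSubst ((ls.take k).reverse)) Tk) ∨
      ((∃ (k : ℕ) (lk : Trm F), ls[k]? = some lk ∧ i ∈ Trm.FV lk) ∧
        ∃ (D : F) (ts : List (Trm F)), Trm.rename (fun j => j + i + 1) A =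
          Trm.appList (.sym D) ts ∧ ¬ Defined R D ∧ ts.length = Trm.piArity (Θ D)))

/-! # Size-change termination -/

/-- Entries of size-change matrices: `−1`, `0` or `∞`. -/
inductive SCTe : Type
  | minusOne : SCTe
  | zero : SCTe
  | infty : SCTe
deriving DecidableEq

/-- Min-plus multiplication of entries (addition, truncated at `−1`). -/
def SCTe.comp : SCTe → SCTe → SCTe
  | .infty, _ => .infty
  | _, .infty => .infty
  | .minusOne, _ => .minusOne
  | _, .minusOne => .minusOne
  | .zero, .zero => .zero

/-- Minimum of entries (`−1 < 0 < ∞`). -/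
def SCTe.min : SCTe → SCTe → SCTe
  | .minusOne, _ => .minusOne
  | _, .minusOne => .minusOne
  | .zero, _ => .zero
  | .infty, x => x

/-- Base of the relation `⊵`: `f t₁…t_n ⊵ t_i` for `f ∈ F`. -/
def ArgSubBase {F : Type} (t u : Trm F) : Prop :=
  ∃ (f : F) (ts : List (Trm F)), t = Trm.appList (.sym f) ts ∧ u ∈ ts

/-- `⊵`: the smallest transitive relation such that `f t₁…t_n ⊵ t_i` for `f ∈ F`. -/
def ArgGT {F : Type} : Trm F → Trm F → Prop := Relation.TransGen ArgSubBase

open Classical in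
/-- The size-change matrix of a dependency pair `f l₁…l_p > g m₁…m_q`:
`a_{ij} = −1` if `l_i ⊵ m_j`, `a_{ij} = 0` if `l_i = m_j`, `a_{ij} = ∞` otherwise
(in particular if `i > p` or `j > q`). -/
noncomputable def dpMatrix {F : Type} (ls ms : List (Trm F)) : ℕ → ℕ → SCTe := fun i j =>
  match ls[i]?, ms[j]? with
  | some li, some mj =>
      if ArgGT li mj then .minusOne else if li = mj then .zero else .infty
  | _, _ => .infty

/-- Min-plus product of matrices, the middle dimension being `d`. -/
def matComp (d : ℕ) (M N : ℕ → ℕ → SCTe) : ℕ → ℕ → SCTe := fun i j =>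
  ((List.range d).map fun k => (M i k).comp (N k j)).foldr SCTe.min .infty

/-- The transitive closure of the call graph of `R`: edges are labeled by the matrices of
the dependency pairs, multiplied in the min-plus semiring along paths. -/
inductive TCEdge {F : Type} (R : Rules F) (Θ : F → Trm F) : F → F → (ℕ → ℕ → SCTe) → Prop
  | base {f g : F} {ls ms : List (Trm F)} : DepPair R f ls g ms →
      TCEdge R Θ f g (dpMatrix ls ms)
  | comp {f g h : F} {M N : ℕ → ℕ → SCTe} : TCEdge R Θ f g M → TCEdge R Θ g h N →
      TCEdge R Θ f h (matComp (Trm.piArity (Θ g)) M N)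

/-- `R` is size-change terminating: in the transitive closure of the call graph, every
idempotent matrix labeling a loop has some `−1` on its diagonal. -/
def SCT {F : Type} (R : Rules F) (Θ : F → Trm F) : Prop :=
  ∀ (f : F) (M : ℕ → ℕ → SCTe), TCEdge R Θ f f M → matComp (Trm.piArity (Θ f)) M M = M →
    ∃ i < Trm.piArity (Θ f), M i i = SCTe.minusOne

/-! # Substitution lemmas -/

namespace Trm

variable {F : Type}

theorem rename_eq_subst (t : Trm F) : ∀ ρ : ℕ → ℕ, rename ρ t = subst (fun n => .var (ρ n)) t := by
  have hup : ∀ ρ : ℕ → ℕ,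
      (fun n => (.var (upRen ρ n) : Trm F)) = up (fun n => .var (ρ n)) := by
    intro ρ; funext n; cases n <;> rfl
  induction t <;> intro ρ <;> simp_all [rename, subst]

theorem subst_rename (t : Trm F) : ∀ (ρ : ℕ → ℕ) (σ : ℕ → Trm F),
    subst σ (rename ρ t) = subst (fun n => σ (ρ n)) t := by
  have hup : ∀ (ρ : ℕ → ℕ) (σ : ℕ → Trm F),
      (fun n => up σ (upRen ρ n)) = up (fun n => σ (ρ n)) := by
    intro ρ σ; funext n; cases n <;> rfl
  induction t <;> intro ρ σ <;> simp_all [rename, subst]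

theorem rename_rename (t : Trm F) (ρ ρ' : ℕ → ℕ) :
    rename ρ' (rename ρ t) = rename (fun n => ρ' (ρ n)) t := by
  rw [rename_eq_subst _ ρ', subst_rename, rename_eq_subst]

theorem rename_subst (t : Trm F) : ∀ (σ : ℕ → Trm F) (ρ : ℕ → ℕ),
    rename ρ (subst σ t) = subst (fun n => rename ρ (σ n)) t := by
  have hup : ∀ (σ : ℕ → Trm F) (ρ : ℕ → ℕ),
      (fun n => rename (upRen ρ) (up σ n)) = up (fun n => rename ρ (σ n)) := by
    intro σ ρ; funext n
    cases n with
    | zero => rfl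
    | succ n => simp only [up, rename_rename, upRen]
  induction t <;> intro σ ρ <;> simp_all [rename, subst]

theorem subst_subst (t : Trm F) : ∀ γ σ : ℕ → Trm F,
    subst σ (subst γ t) = subst (compSubst γ σ) t := by
  have hup : ∀ γ σ : ℕ → Trm F, compSubst (up γ) (up σ) = up (compSubst γ σ) := by
    intro γ σ; funext n
    cases n with
    | zero => rfl
    | succ n => simp only [compSubst, up, subst_rename, rename_subst]
  induction t with
  | var n => intro γ σ; rfl
  | _ => intro γ σ; simp_all [subst]

theorem rename_subst1 (ρ : ℕ → ℕ) (a b : Trm F) :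
    rename ρ (subst1 a b) = subst1 (rename ρ a) (rename (upRen ρ) b) := by
  simp only [subst1, rename_subst, subst_rename]
  congr 1; funext n; cases n <;> rfl

theorem compSubst_up_scons (γ σ : ℕ → Trm F) (a : Trm F) :
    compSubst (up γ) (scons a σ) = scons a (compSubst γ σ) := by
  funext n
  cases n with
  | zero => rfl
  | succ n => simp only [compSubst, up, subst_rename, scons]

theorem isKind_rename (t : Trm F) : ∀ ρ : ℕ → ℕ, IsKind (rename ρ t) ↔ IsKind t := by
  induction t <;> intro ρ <;> simp_all [rename, IsKind]

theorem subst_appList (σ : ℕ → Trm F) (ts : List (Trm F)) : ∀ h : Trm F,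
    subst σ (appList h ts) = appList (subst σ h) (ts.map (subst σ)) := by
  induction ts with
  | nil => intro h; rfl
  | cons a as ih => intro h; exact ih (.app h a)

theorem length_teleN (n : ℕ) : ∀ T : Trm F, n ≤ piArity T → (teleN n T).length = n := by
  induction n with
  | zero => intro T _; rfl
  | succ n ih =>
    intro T h
    cases T with
    | pi A B => simp [teleN, ih B (by simpa [piArity] using h)]
    | _ => simp [piArity] at h

theorem getElem?_teleN (n : ℕ) : ∀ (T : Trm F) (k : ℕ), n ≤ piArity T → k < n →
    (teleN n T)[n - 1 - k]? = (piDoms T)[k]? := by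
  induction n with
  | zero => intro T k _ h; omega
  | succ n ih =>
    intro T k h hk
    cases T with
    | pi A B =>
      have h' : n ≤ piArity B := by simpa [piArity] using h
      have hl := length_teleN n B h'
      cases k with
      | zero =>
        simp only [teleN, piDoms]
        rw [List.getElem?_append_right (by omega)]
        simp [hl]
      | succ k =>
        simp only [teleN, piDoms]
        rw [List.getElem?_append_left (by omega), List.getElem?_cons_succ, ← ih B k h' (by omega)]
        congr 1; omega
    | _ => simp [piArity] at h

end Trm

theorem isKindLike_rename {F : Type} (ρ : ℕ → ℕ) (t : Trm F) :
    IsKindLike (Trm.rename ρ t) ↔ IsKindLike t := by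
  unfold IsKindLike
  rw [Trm.isKind_rename]
  cases t <;> simp [Trm.rename]

theorem not_isKindLike_up {F : Type} {γ : ℕ → Trm F} (h : ∀ n, ¬ IsKindLike (γ n)) (n : ℕ) :
    ¬ IsKindLike (Trm.up γ n) := by
  cases n with
  | zero => simp [Trm.up, IsKindLike, Trm.IsKind]
  | succ n => simpa only [Trm.up, isKindLike_rename] using h n

theorem isKind_subst {F : Type} (t : Trm F) : ∀ γ : ℕ → Trm F, (∀ n, ¬ IsKindLike (γ n)) →
    (Trm.IsKind (Trm.subst γ t) ↔ Trm.IsKind t) := by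
  induction t with
  | var n =>
    intro γ h
    simp only [Trm.subst, Trm.IsKind, iff_false]
    exact fun hk => h n (Or.inl hk)
  | pi A B _ ihB => intro γ h; exact ihB _ (not_isKindLike_up h)
  | _ => intro γ h; simp [Trm.subst, Trm.IsKind]

theorem mkSubst_reverse_drop {F : Type} (ls : List (Trm F)) {k : ℕ} (hk : k < ls.length) (j : ℕ) :
    mkSubst ls.reverse (j + (ls.length - 1 - k) + 1) = mkSubst (ls.take k).reverse j := by
  have htake : (ls.take k).length = k := by simp; omega
  unfold mkSubst
  by_cases hj : j < k
  · rw [List.getElem?_reverse (by omega), List.getElem?_reverse (by omega), htake,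
      List.getElem?_take_of_lt (by omega),
      show ls.length - 1 - (j + (ls.length - 1 - k) + 1) = k - 1 - j by omega,
      List.getElem?_eq_getElem (by omega)]
    rfl
  · rw [List.getElem?_eq_none (by simp only [List.length_reverse]; omega),
      List.getElem?_eq_none (by simp only [List.length_reverse]; omega)]
    simp only [Option.getD_none, List.length_reverse, htake]
    congr 1; omega

/-! # Strong normalization -/

section Reduction

variable {F : Type} {R : Rules F}

theorem Red.rename {t u : Trm F} (h : Red R t u) :
    ∀ ρ : ℕ → ℕ, Red R (Trm.rename ρ t) (Trm.rename ρ u) := by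
  induction h with
  | beta A b a => intro ρ; rw [Trm.rename_subst1]; exact .beta _ _ _
  | rule σ hr => intro ρ; rw [Trm.rename_subst, Trm.rename_subst]; exact .rule _ hr
  | appL _ ih => exact fun ρ => .appL (ih ρ)
  | appR _ ih => exact fun ρ => .appR (ih ρ)
  | piL _ ih => exact fun ρ => .piL (ih ρ)
  | piR _ ih => exact fun ρ => .piR (ih _)
  | lamL _ ih => exact fun ρ => .lamL (ih ρ)
  | lamR _ ih => exact fun ρ => .lamR (ih _)

theorem SN.of_map {g : Trm F → Trm F} (hg : ∀ x y, Red R x y → Red R (g x) (g y)) {t : Trm F}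
    (h : SN R (g t)) : SN R t :=
  Subrelation.accessible (fun {_ _} hr => hg _ _ hr) (InvImage.accessible g h)

theorem SN.of_rename {ρ : ℕ → ℕ} {t : Trm F} (h : SN R (Trm.rename ρ t)) : SN R t :=
  h.of_map fun _ _ hr => hr.rename ρ

/-- If `tσ` terminates then so does `xσ` for every free variable `x` of `t`. -/
theorem SN.of_subst {t : Trm F} : ∀ {σ : ℕ → Trm F} {i : ℕ}, SN R (Trm.subst σ t) →
    i ∈ Trm.FV t → SN R (σ i) := by
  induction t with
  | type | kind | sym _ => intro σ i _ hi; exact absurd hi (by simp [Trm.FV])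
  | var n => intro σ i h hi; obtain rfl : i = n := hi; exact h
  | app t u iht ihu =>
    intro σ i h hi
    rcases hi with hi | hi
    · exact iht (SN.of_map (g := fun x => .app x _) (fun _ _ => .appL) h) hi
    · exact ihu (SN.of_map (g := fun x => .app _ x) (fun _ _ => .appR) h) hi
  | pi A B ihA ihB =>
    intro σ i h hi
    rcases hi with hi | hi
    · exact ihA (SN.of_map (g := fun x => .pi x _) (fun _ _ => .piL) h) hi
    · exact (ihB (SN.of_map (g := fun x => .pi _ x) (fun _ _ => .piR) h) hi).of_rename
  | lam A b ihA ihb =>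
    intro σ i h hi
    rcases hi with hi | hi
    · exact ihA (SN.of_map (g := fun x => .lam x _) (fun _ _ => .lamL) h) hi
    · exact (ihb (SN.of_map (g := fun x => .lam _ x) (fun _ _ => .lamR) h) hi).of_rename

/-- Terms whose head is a variable or an undefined symbol. -/
def RigidHead (R : Rules F) : Trm F → Prop
  | .var _ => True
  | .sym g => ¬ Defined R g
  | .app t _ => RigidHead R t
  | _ => False

theorem rigidHead_appList_iff (ts : List (Trm F)) : ∀ h : Trm F,
    RigidHead R (Trm.appList h ts) ↔ RigidHead R h := by
  induction ts with
  | nil => intro h; rfl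
  | cons a as ih => intro h; exact ih (.app h a)

theorem RigidHead.appList {h : Trm F} (hh : RigidHead R h) (ts : List (Trm F)) :
    RigidHead R (Trm.appList h ts) :=
  (rigidHead_appList_iff ts h).2 hh

theorem RigidHead.not_isKindLike {t : Trm F} (h : RigidHead R t) : ¬ IsKindLike t := by
  cases t <;> simp_all [RigidHead, IsKindLike, Trm.IsKind]

theorem not_rigidHead_lhs (hRS : IsRewriteSystem R) {l r : Trm F} (hr : (l, r) ∈ R)
    (σ : ℕ → Trm F) : ¬ RigidHead R (Trm.subst σ l) := by
  obtain ⟨-, f, ls, hl⟩ := hRS _ hr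
  obtain rfl : l = Trm.appList (.sym f) ls := hl
  rw [Trm.subst_appList, rigidHead_appList_iff]
  exact fun h => h ⟨ls, r, hr⟩

theorem RigidHead.red (hRS : IsRewriteSystem R) {t u : Trm F} (h : Red R t u) :
    RigidHead R t → RigidHead R u := by
  induction h with
  | rule σ hr => exact fun ht => absurd ht (not_rigidHead_lhs hRS hr σ)
  | appL _ ih => exact ih
  | appR _ _ => exact id
  | _ => exact False.elim

theorem RigidHead.redStar (hRS : IsRewriteSystem R) {t u : Trm F} (ht : RigidHead R t)
    (h : RedStar R t u) : RigidHead R u := by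
  induction h with
  | refl => exact ht
  | tail _ h ih => exact ih.red hRS h

theorem RigidHead.sn_app (hRS : IsRewriteSystem R) {t a : Trm F} (ht : SN R t) (ha : SN R a)
    (hh : RigidHead R t) : SN R (.app t a) := by
  induction ht generalizing a with
  | intro t _ iht =>
    induction ha with
    | intro a ha iha =>
      refine Acc.intro _ fun u hu => ?_
      generalize hv : Trm.app t a = v at hu
      cases hu with
      | beta A b a' => cases hv; exact hh.elim
      | rule σ hr =>
        have hv' : RigidHead R (.app t a) := hh
        exact absurd (hv ▸ hv') (not_rigidHead_lhs hRS hr σ)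
      | appL h => cases hv; exact iht _ h (Acc.intro _ ha) (hh.red hRS h)
      | appR h => cases hv; exact iha _ h
      | _ => cases hv

end Reduction

/-! # Interpretations consist of terminating terms and contain the rigid ones -/

section Interpretation

variable {F : Type} {R : Rules F} {I : Interp F}

/-- `S` lies between the terminating terms with a rigid head and the terminating terms. -/
def Saturated (R : Rules F) (S : Set (Trm F)) : Prop :=
  S ⊆ SNset R ∧ ∀ t, RigidHead R t → SN R t → t ∈ S

theorem Saturated.var_mem (hRS : IsRewriteSystem R) {S : Set (Trm F)} (h : Saturated R S)
    (n : ℕ) : .var n ∈ S := by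
  refine h.2 _ trivial (Acc.intro _ fun u hu => ?_)
  generalize hv : Trm.var n = v at hu
  cases hu with
  | rule σ hr =>
    have hrigid : RigidHead R (.var n) := trivial
    exact absurd (hv ▸ hrigid) (not_rigidHead_lhs hRS hr σ)
  | _ => cases hv

theorem saturated_SNset : Saturated R (SNset R) := ⟨fun _ h => h, fun _ _ h => h⟩

theorem saturated_domD (hRS : IsRewriteSystem R) : Saturated R (domD R I) :=
  ⟨fun _ h => h.1, fun _ ht hs => ⟨hs, fun _ _ h => (ht.redStar hRS h).elim⟩⟩

/-- The sets `{t | ∀ a ∈ X, t a ∈ Y a}` are saturated when `X` and all `Y a` are. -/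
theorem saturated_pi (hRS : IsRewriteSystem R) {X S : Set (Trm F)} {Y : Trm F → Set (Trm F)}
    (hX : Saturated R X) (hY : ∀ a ∈ X, Saturated R (Y a))
    (hS : ∀ t, t ∈ S ↔ ∀ a ∈ X, Trm.app t a ∈ Y a) : Saturated R S := by
  refine ⟨fun t ht => ?_, fun t hh ht => (hS t).2 fun a ha => ?_⟩
  · have h0 := hX.var_mem hRS 0
    exact SN.of_map (g := fun x => .app x _) (fun _ _ => .appL)
      ((hY _ h0).1 ((hS t).1 ht _ h0))
  · exact (hY a ha).2 (.app t a) hh (hh.sn_app hRS ht (hX.1 ha))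

/-- The inductively generated part of the domain of `I`. -/
inductive GenDom (R : Rules F) (I : Interp F) : Trm F → Prop
  | intro {T : Trm F} : SN R T →
      (∀ A B, RedStar R T (.pi A B) → GenDom R I A) →
      (∀ A B, RedStar R T (.pi A B) → ∀ S ∈ I A, ∀ a ∈ S, GenDom R I (Trm.subst1 a B)) →
      GenDom R I T

theorem dom_iff_mem_domD (hI : interpF R I = I) (T : Trm F) : (I T).Dom ↔ T ∈ domD R I := by
  conv_lhs => rw [← hI]
  rfl

theorem GenDom.dom (hI : interpF R I = I) {T : Trm F} (h : GenDom R I T) : (I T).Dom := by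
  induction h with
  | intro hs _ _ ihA ihB =>
    exact (dom_iff_mem_domD hI _).2 ⟨hs, fun A B h => ⟨ihA A B h, ihB A B h⟩⟩

/-- The restriction of `I` to the inductively generated part of its domain. -/
def genRestrict (R : Rules F) (I : Interp F) (hI : interpF R I = I) : Interp F := fun T =>
  ⟨GenDom R I T, fun h => (I T).get (h.dom hI)⟩

theorem mem_genRestrict (hI : interpF R I = I) {T : Trm F} {S : Set (Trm F)} :
    S ∈ genRestrict R I hI T ↔ GenDom R I T ∧ S ∈ I T :=
  ⟨fun ⟨h, e⟩ => ⟨h, h.dom hI, e⟩, fun ⟨h, _, e⟩ => ⟨h, e⟩⟩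

theorem mem_domD_genRestrict (hI : interpF R I = I) (T : Trm F) :
    T ∈ domD R (genRestrict R I hI) ↔ GenDom R I T := by
  constructor
  · rintro ⟨hs, h⟩
    exact ⟨hs, fun A B hr => (h A B hr).1, fun A B hr S hS a ha =>
      (h A B hr).2 S ((mem_genRestrict hI).2 ⟨(h A B hr).1, hS⟩) a ha⟩
  · rintro ⟨hs, hA, hB⟩
    exact ⟨hs, fun A B hr => ⟨hA A B hr, fun S hS a ha =>
      hB A B hr S ((mem_genRestrict hI).1 hS).2 a ha⟩⟩

theorem piPart_genRestrict (hI : interpF R I = I) {T A B : Trm F} (hT : GenDom R I T)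
    (hr : RedStar R T (.pi A B)) : piPart (genRestrict R I hI) A B = piPart I A B := by
  obtain ⟨-, hA, hB⟩ := hT
  ext t
  constructor
  · intro h S hS a ha S' hS'
    exact h S ((mem_genRestrict hI).2 ⟨hA A B hr, hS⟩) a ha S'
      ((mem_genRestrict hI).2 ⟨hB A B hr S hS a ha, hS'⟩)
  · intro h S hS a ha S' hS'
    exact h S ((mem_genRestrict hI).1 hS).2 a ha S' ((mem_genRestrict hI).1 hS').2

theorem interpF_genRestrict (hI : interpF R I = I) :
    interpF R (genRestrict R I hI) = genRestrict R I hI := by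
  funext T
  refine Part.ext' (mem_domD_genRestrict hI T) fun h₁ h₂ => ?_
  have hget : (genRestrict R I hI T).get h₂ = (interpF R I T).get
      ((dom_iff_mem_domD hI T).1 (h₂.dom hI)) := by
    exact Part.get_eq_get_of_eq _ (h₂.dom hI) (congrFun hI T).symm
  rw [hget]
  simp only [interpF]
  split_ifs with h
  · exact piPart_genRestrict hI h₂ h.choose_spec.choose_spec.1
  · rfl

/-- Every element of the domain of the least fixpoint is inductively generated. -/
theorem GenDom.of_dom (hlfp : IsLfpInterp (interpF R) I) {T : Trm F} (h : (I T).Dom) :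
    GenDom R I T :=
  ((mem_genRestrict hlfp.1).1
    (hlfp.2 _ (interpF_genRestrict hlfp.1) T _ (Part.get_mem h))).1

theorem mem_eq_get_interpF (hI : interpF R I = I) {T : Trm F} {S : Set (Trm F)} (hS : S ∈ I T) :
    ∃ h, S = (interpF R I T).get h := by
  rw [← hI] at hS
  obtain ⟨h, e⟩ := hS
  exact ⟨h, e.symm⟩

theorem partMem_eq_get {T : Trm F} (h : (I T).Dom) : partMem I T = (I T).get h := by
  ext t
  exact ⟨fun ht => ht _ (Part.get_mem h), fun ht S hS => Part.get_eq_of_mem hS h ▸ ht⟩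

theorem GenDom.saturated (hRS : IsRewriteSystem R) (hI : interpF R I = I) {T : Trm F}
    (hT : GenDom R I T) : ∀ S ∈ I T, Saturated R S := by
  induction hT with
  | @intro T hs hA hB ihA ihB =>
    intro S hS
    obtain ⟨hd, rfl⟩ := mem_eq_get_interpF hI hS
    simp only [interpF]
    split_ifs with h
    · have hr := h.choose_spec.choose_spec.1
      have hdA := (hA _ _ hr).dom hI
      refine saturated_pi hRS (X := (I _).get hdA) (Y := fun a => partMem I (Trm.subst1 a h.choose_spec.choose))
        (ihA _ _ hr _ (Part.get_mem hdA)) (fun a ha => ?_) fun t => ?_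
      · have hdB := (hB _ _ hr _ (Part.get_mem hdA) a ha).dom hI
        simp only [partMem_eq_get hdB]
        exact ihB _ _ hr _ (Part.get_mem hdA) a ha _ (Part.get_mem hdB)
      · constructor
        · exact fun ht a ha S' hS' => ht _ (Part.get_mem hdA) a ha S' hS'
        · exact fun ht S hS a ha S' hS' => ht a (Part.get_eq_of_mem hS hdA ▸ ha) S' hS'
    · exact saturated_SNset

open Classical in
theorem interp_of_not_isKindLike {T : Trm F} (hT : ¬ IsKindLike T) (σ : ℕ → Trm F) :
    interp R I T σ =
      if Trm.subst σ T ∈ domD R I then partMem I (Trm.subst σ T) else SNset R := by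
  cases T with
  | type => exact absurd (Or.inl trivial) hT
  | kind => exact absurd (Or.inr rfl) hT
  | pi A B =>
    have hB : ¬ Trm.IsKind B := fun h => hT (Or.inl h)
    rw [interp, if_neg hB]
  | _ => rw [interp]

theorem interp_subst (T : Trm F) : ∀ γ σ : ℕ → Trm F, (∀ n, ¬ IsKindLike (γ n)) →
    interp R I (Trm.subst γ T) σ = interp R I T (compSubst γ σ) := by
  have generic : ∀ (T : Trm F) (γ σ : ℕ → Trm F), ¬ IsKindLike T →
      ¬ IsKindLike (Trm.subst γ T) →
      interp R I (Trm.subst γ T) σ = interp R I T (compSubst γ σ) := by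
    intro T γ σ hT hT'
    rw [interp_of_not_isKindLike hT, interp_of_not_isKindLike hT', Trm.subst_subst]
  induction T with
  | type | kind => intro γ σ _; simp only [Trm.subst, interp]
  | pi A B ihA ihB =>
    intro γ σ h
    by_cases hB : Trm.IsKind B
    · simp only [Trm.subst, interp, isKind_subst B _ (not_isKindLike_up h), hB, if_true, ihA γ σ h,
        ihB _ _ (not_isKindLike_up h), Trm.compSubst_up_scons]
    · refine generic _ γ σ ?_ ?_
      · rintro (h' | h')
        exacts [hB h', nomatch h']
      · rintro (h' | h')
        exacts [hB ((isKind_subst B _ (not_isKindLike_up h)).1 h'), nomatch h']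
  | var n => exact fun γ σ h => generic _ γ σ (by simp [IsKindLike, Trm.IsKind]) (h n)
  | _ =>
    exact fun γ σ _ => generic _ γ σ (by simp [IsKindLike, Trm.IsKind])
      (by simp [IsKindLike, Trm.IsKind, Trm.subst])

theorem interp_rename (T : Trm F) (ρ : ℕ → ℕ) (σ : ℕ → Trm F) :
    interp R I (Trm.rename ρ T) σ = interp R I T (fun n => σ (ρ n)) := by
  rw [Trm.rename_eq_subst, interp_subst]
  · rfl
  · simp [IsKindLike, Trm.IsKind]

theorem saturated_partMem (hRS : IsRewriteSystem R) (hlfp : IsLfpInterp (interpF R) I) {T : Trm F}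
    (h : T ∈ domD R I) : Saturated R (partMem I T) := by
  have hd := (dom_iff_mem_domD hlfp.1 T).2 h
  rw [partMem_eq_get hd]
  exact (GenDom.of_dom hlfp hd).saturated hRS hlfp.1 _ (Part.get_mem hd)

theorem saturated_interp (hRS : IsRewriteSystem R) (hlfp : IsLfpInterp (interpF R) I)
    (T : Trm F) : ∀ σ : ℕ → Trm F, Saturated R (interp R I T σ) := by
  have generic : ∀ (T : Trm F) (σ : ℕ → Trm F), ¬ IsKindLike T →
      Saturated R (interp R I T σ) := by
    intro T σ hT
    rw [interp_of_not_isKindLike hT]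
    split_ifs with h
    · exact saturated_partMem hRS hlfp h
    · exact saturated_SNset
  induction T with
  | type | kind => intro σ; simp only [interp]; exact saturated_domD hRS
  | pi A B ihA ihB =>
    intro σ
    by_cases hB : Trm.IsKind B
    · simp only [interp, if_pos hB]
      exact saturated_pi hRS (ihA σ) (fun a _ => ihB (Trm.scons a σ)) fun t => Iff.rfl
    · exact generic _ σ (by rintro (h | h); exacts [hB h, by cases h])
  | _ => exact fun σ => generic _ σ (by simp [IsKindLike, Trm.IsKind])

/-- A type headed by an undefined symbol is interpreted by the set of terminating terms. -/
theorem interp_of_rigidHead (hRS : IsRewriteSystem R) (hI : interpF R I = I) {T : Trm F}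
    {σ : ℕ → Trm F} (hT : ¬ IsKindLike T) (h : RigidHead R (Trm.subst σ T)) :
    interp R I T σ = SNset R := by
  rw [interp_of_not_isKindLike hT]
  split_ifs with hd
  · rw [partMem_eq_get ((dom_iff_mem_domD hI _).2 hd)]
    obtain ⟨_, e⟩ := mem_eq_get_interpF hI (Part.get_mem ((dom_iff_mem_domD hI _).2 hd))
    rw [e]
    simp only [interpF]
    rw [dif_neg]
    rintro ⟨A, B, hr, -⟩
    exact h.redStar hRS hr
  · rfl

end Interpretation

theorem not_isKindLike_mkSubst {F : Type} {ls : List (Trm F)} (h : ∀ l ∈ ls, ¬ IsKindLike l)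
    (n : ℕ) : ¬ IsKindLike (mkSubst ls n) := by
  unfold mkSubst
  by_cases hn : n < ls.length
  · rw [List.getElem?_eq_getElem hn]; exact h _ (List.getElem_mem hn)
  · rw [List.getElem?_eq_none (by omega)]; simp [IsKindLike, Trm.IsKind]

/-- The `k`-th argument of an instantiated left-hand side belongs to the interpretation of the
`k`-th domain. -/
theorem Models.subst_arg_mem {F : Type} {R : Rules F} {I : Interp F} {T : Trm F}
    {ls : List (Trm F)} {σ : ℕ → Trm F}
    (hM : Models R I (compSubst (mkSubst ls.reverse) σ) (Trm.teleN ls.length T))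
    (hlen : ls.length ≤ Trm.piArity T) {k : ℕ} {lk Tk : Trm F} (hk : ls[k]? = some lk)
    (hTk : (Trm.piDoms T)[k]? = some Tk) :
    Trm.subst σ lk ∈ interp R I Tk (compSubst (mkSubst (ls.take k).reverse) σ) := by
  obtain ⟨hlt, rfl⟩ := List.getElem?_eq_some_iff.1 hk
  have h := hM (ls.length - 1 - k) Tk (by rw [Trm.getElem?_teleN _ _ _ hlen hlt, hTk])
  have hl : mkSubst ls.reverse (ls.length - 1 - k) = ls[k] := by
    unfold mkSubst
    rw [List.getElem?_reverse (by omega),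
      show ls.length - 1 - (ls.length - 1 - k) = k by omega, hk]
    rfl
  simp only [compSubst, hl, mkSubst_reverse_drop ls hlt] at h
  exact h

/-- Lemma 14 of the paper. Every plain function-passing well-structured
rewriting system is accessible. -/
theorem pfp_accessible {F : Type} (R : Rules F) (Θ sΘ : F → Trm F)
    (hRS : IsRewriteSystem R)
    (hconf : LocallyConfluent R)
    (hpres : PresTyping R Θ sΘ)
    (calI : Interp F) (hlfp : IsLfpInterp (interpF R) calI)
    (Δ : Trm F → Trm F → List (Trm F))
    (hws : WellStructured R Θ sΘ Δ)
    (hpfp : PFP R Θ Δ) :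
    Accessible R Θ sΘ calI Δ := by
  rintro l r hlr f ls rfl σ - - hM
  have hlen := hws.2.1 _ r hlr f ls rfl
  obtain ⟨hnk, hΔ⟩ := hpfp _ r hlr f ls rfl
  intro i A hA
  have hren := interp_rename (R := R) (I := calI) A (fun j => j + i + 1) σ
  rw [← hren]
  rcases hΔ i A hA with ⟨k, Tk, hk, hTk, hAT⟩ | ⟨⟨k, lk, hk, hi⟩, D, ts, hAT, hD, -⟩
  · rw [hAT, interp_subst]
    · exact hM.subst_arg_mem hlen hk hTk
    · refine not_isKindLike_mkSubst fun l hl => hnk l ?_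
      exact List.mem_of_mem_take (List.mem_reverse.1 hl)
  · have hrigid : RigidHead R (Trm.sym D) := hD
    rw [hAT, interp_of_rigidHead hRS hlfp.1 (hrigid.appList ts).not_isKindLike
      (by rw [Trm.subst_appList]; exact hrigid.appList _)]
    have hlt : k < ls.length := (List.getElem?_eq_some_iff.1 hk).1
    obtain ⟨Tk, hTk⟩ : ∃ Tk, (Trm.piDoms (Θ f))[k]? = some Tk := by
      rw [← Trm.getElem?_teleN _ _ _ hlen hlt]
      exact ⟨_, List.getElem?_eq_getElem (by rw [Trm.length_teleN _ _ hlen]; omega)⟩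
    exact SN.of_subst ((saturated_interp hRS hlfp Tk _).1 (hM.subst_arg_mem hlen hk hTk)) hi
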